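/- Let A be a tuple of complex numbers with a distinguished entry α̂ satisfying ℜ(α̂ − α) < 1 for every entry α of A, and let A′ be A with that entry removed. Then for every prime p and every integer d ≥ 0, G_A(1−α̂, p^d) − p^{−1+α̂} G_A(1−α̂, p^{d+1}) = ∏_{α∈A′} (1 − p^{−1+α̂−α}) · τ_{A′}(p^d). -/

import Mathlib

open Complex

/-- Shifted divisor function: `tauSh A n = ∑_{n₁⋯n_k = n} n₁^{-α₁}⋯n_k^{-α_k}`,
defined by iterated Dirichlet convolution. -/
noncomputable def tauSh : List ℂ → ℕ → ℂ
  | [], n => if n = 1 then 1 else 0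
  | a :: A, n => ∑ d ∈ n.divisors, (d : ℂ) ^ (-a) * tauSh A (n / d)

/-- `g_A(s,q) = ∏_{p ∣ q} ( ∏_{α∈A} (1 − p^{−s−α}) · ∑_{j≥0} τ_A(p^{j+q_p}) p^{−js} )`. -/
noncomputable def gSh (A : List ℂ) (s : ℂ) (q : ℕ) : ℂ :=
  ∏ p ∈ q.primeFactors,
    ((A.map (fun α => 1 - (p : ℂ) ^ (-s - α))).prod *
      ∑' j : ℕ, tauSh A (p ^ (j + q.factorization p)) * (p : ℂ) ^ (-(j : ℂ) * s))

/-- `G_A(s,q) = ∑_{d∣q} (μ(d)/φ(d)) d^s ∑_{e∣d} (μ(e)/e^s) g_A(s, qe/d)`. -/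
noncomputable def GSh (A : List ℂ) (s : ℂ) (q : ℕ) : ℂ :=
  ∑ d ∈ q.divisors, ((ArithmeticFunction.moebius d : ℂ) / (Nat.totient d : ℂ)) * (d : ℂ) ^ s *
    ∑ e ∈ d.divisors, (ArithmeticFunction.moebius e : ℂ) / (e : ℂ) ^ s * gSh A s (q * e / d)

/-!
Put `x = p^{-s}` and `E_A = ∏_{α ∈ A} (1 - p^{-s-α})`. As `x^n g_A(s, p^n)` is `E_A` times the
tail `j ≥ n` of `∑ τ_A(p^j) x^j = 1 / E_A`, one has
`g_A(s, p^n) - x g_A(s, p^{n+1}) = E_A τ_A(p^n)`.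
Only the divisors `1` and `p` contribute to `G_A(s, p^{n+1})`, and the same difference appears
there: `G_A(s, p^{n+1}) = g_A(s, p^{n+1}) - p^s / (p - 1) · E_A τ_A(p^n)`.
At `s = 1 - α̂` one has `E_A = (1 - 1/p) E_{A'}`, and the recursion
`τ_A(p^{n+1}) = τ_{A'}(p^{n+1}) + p^{-α̂} τ_A(p^n)` turns this into
`G_A(s, p^n) = g_A(s, p^n) - E_{A'} (τ_A(p^n) - τ_{A'}(p^n))`, valid for all `n ≥ 0`.
Subtracting `x` times the next instance, the terms in `τ_A(p^n)` cancel.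
-/

/-- The arithmetic function `n ↦ n^{-a}`, with value `0` at `0`. Its Dirichlet products over the
entries of a list are the shifted divisor functions. -/
noncomputable def negCPow (a : ℂ) : ArithmeticFunction ℂ :=
  ⟨fun n => if n = 0 then 0 else (n : ℂ) ^ (-a), if_pos rfl⟩

lemma negCPow_apply {n : ℕ} (hn : n ≠ 0) (a : ℂ) : negCPow a n = (n : ℂ) ^ (-a) :=
  if_neg hn

lemma tauSh_eq_prod_negCPow (A : List ℂ) (n : ℕ) : tauSh A n = (A.map negCPow).prod n := by
  induction A generalizing n with
  | nil => simp only [tauSh, List.map_nil, List.prod_nil, ArithmeticFunction.one_apply]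
  | cons a A ih =>
    rw [List.map_cons, List.prod_cons, ArithmeticFunction.mul_apply,
      Nat.sum_divisorsAntidiagonal fun d e => negCPow a d * (A.map negCPow).prod e, tauSh]
    refine Finset.sum_congr rfl fun d hd => ?_
    rw [negCPow_apply (Nat.pos_of_mem_divisors hd).ne', ih]

lemma tauSh_eq_of_perm {A B : List ℂ} (hAB : A.Perm B) : tauSh A = tauSh B := by
  ext n
  rw [tauSh_eq_prod_negCPow, tauSh_eq_prod_negCPow, (hAB.map negCPow).prod_eq]

lemma gSh_eq_of_perm {A B : List ℂ} (hAB : A.Perm B) (s : ℂ) (q : ℕ) :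
    gSh A s q = gSh B s q := by
  simp only [gSh, tauSh_eq_of_perm hAB, (hAB.map _).prod_eq]

lemma GSh_eq_of_perm {A B : List ℂ} (hAB : A.Perm B) (s : ℂ) (q : ℕ) :
    GSh A s q = GSh B s q := by
  simp only [GSh, gSh_eq_of_perm hAB]

lemma tauSh_one (A : List ℂ) : tauSh A 1 = 1 := by
  induction A with
  | nil => simp [tauSh]
  | cons a A ih => simp [tauSh, ih]

lemma gSh_one (A : List ℂ) (s : ℂ) : gSh A s 1 = 1 := by
  simp [gSh]

lemma GSh_one (A : List ℂ) (s : ℂ) : GSh A s 1 = 1 := by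
  simp [GSh, gSh_one]

lemma norm_natCast_cpow_neg_sub_lt_one {n : ℕ} (hn : 1 < n) {s α : ℂ} (h : 0 < (s + α).re) :
    ‖(n : ℂ) ^ (-s - α)‖ < 1 := by
  rw [norm_natCast_cpow_of_pos (by lia), ← neg_add', neg_re]
  exact Real.rpow_lt_one_of_one_lt_of_neg (by exact_mod_cast hn) (neg_neg_of_pos h)

/-- The inverse `∏_{α ∈ A} (1 - p^{-s-α})` of the Euler factor at `p` of `∏_{α ∈ A} ζ(s + α)`. -/
noncomputable def invEulerFactor (A : List ℂ) (p : ℕ) (s : ℂ) : ℂ :=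
  (A.map fun α => 1 - (p : ℂ) ^ (-s - α)).prod

lemma invEulerFactor_cons (a : ℂ) (A : List ℂ) (p : ℕ) (s : ℂ) :
    invEulerFactor (a :: A) p s = (1 - (p : ℂ) ^ (-s - a)) * invEulerFactor A p s := by
  simp only [invEulerFactor, List.map_cons, List.prod_cons]

lemma invEulerFactor_cons_one_sub (a : ℂ) (A : List ℂ) (p : ℕ) :
    invEulerFactor (a :: A) p (1 - a) = (1 - (p : ℂ)⁻¹) * invEulerFactor A p (1 - a) := by
  rw [invEulerFactor_cons, show -(1 - a) - a = -1 by ring, cpow_neg_one]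

section PrimePowers

variable {p : ℕ}

lemma tauSh_cons_prime_pow (hp : p.Prime) (a : ℂ) (A : List ℂ) (n : ℕ) :
    tauSh (a :: A) (p ^ n) =
      ∑ kl ∈ Finset.HasAntidiagonal.antidiagonal n,
        ((p : ℂ) ^ (-a)) ^ kl.1 * tauSh A (p ^ kl.2) := by
  rw [tauSh, Nat.sum_divisors_prime_pow hp, Finset.Nat.sum_antidiagonal_eq_sum_range_succ_mk]
  refine Finset.sum_congr rfl fun k hk => ?_
  rw [Nat.pow_div (Finset.mem_range_succ_iff.mp hk) hp.pos, Nat.cast_pow,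
    ← natCast_cpow_natCast_mul, cpow_nat_mul]

lemma tauSh_cons_prime_pow_succ (hp : p.Prime) (a : ℂ) (A : List ℂ) (n : ℕ) :
    tauSh (a :: A) (p ^ (n + 1)) =
      tauSh A (p ^ (n + 1)) + (p : ℂ) ^ (-a) * tauSh (a :: A) (p ^ n) := by
  rw [tauSh_cons_prime_pow hp, tauSh_cons_prime_pow hp, Finset.Nat.sum_antidiagonal_succ,
    Finset.mul_sum, pow_zero, one_mul]
  simp only [pow_succ', mul_assoc]

lemma tauSh_cons_prime_pow_mul_pow (hp : p.Prime) (a : ℂ) (A : List ℂ) (s : ℂ) (n : ℕ) :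
    tauSh (a :: A) (p ^ n) * ((p : ℂ) ^ (-s)) ^ n =
      ∑ kl ∈ Finset.HasAntidiagonal.antidiagonal n,
        ((p : ℂ) ^ (-s - a)) ^ kl.1 * (tauSh A (p ^ kl.2) * ((p : ℂ) ^ (-s)) ^ kl.2) := by
  have hp0 : (p : ℂ) ≠ 0 := Nat.cast_ne_zero.mpr hp.ne_zero
  rw [tauSh_cons_prime_pow hp, Finset.sum_mul]
  refine Finset.sum_congr rfl fun kl hkl => ?_
  rw [← Finset.HasAntidiagonal.mem_antidiagonal.mp hkl, sub_eq_add_neg, cpow_add _ _ hp0]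
  ring

lemma tauSh_nil_prime_pow (hp : p.Prime) {n : ℕ} (hn : n ≠ 0) : tauSh [] (p ^ n) = 0 := by
  simp [tauSh, hp.ne_one, hn]

lemma GSh_prime_pow_succ (hp : p.Prime) (A : List ℂ) (s : ℂ) (n : ℕ) :
    GSh A s (p ^ (n + 1)) = gSh A s (p ^ (n + 1)) -
      (p : ℂ) ^ s / (p - 1) * (gSh A s (p ^ n) - (p : ℂ) ^ (-s) * gSh A s (p ^ (n + 1))) := by
  have moebius_eq_zero (i : ℕ) : ArithmeticFunction.moebius (p ^ (i + 1 + 1)) = 0 := by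
    rw [ArithmeticFunction.moebius_apply_prime_pow hp (by lia), if_neg (by lia)]
  have pow_succ_div : p ^ (n + 1) / p = p ^ n := by rw [pow_succ, Nat.mul_div_cancel _ hp.pos]
  have pow_succ_mul_div : p ^ (n + 1) * p / p = p ^ (n + 1) := Nat.mul_div_cancel _ hp.pos
  rw [GSh, Nat.sum_divisors_prime_pow hp, Finset.sum_range_succ', Finset.sum_range_succ']
  simp only [moebius_eq_zero, Int.cast_zero, zero_div, zero_mul, Finset.sum_const_zero, zero_add,
    pow_one, pow_zero, ArithmeticFunction.moebius_apply_prime hp,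
    ArithmeticFunction.moebius_apply_one, Int.cast_neg, Int.cast_one, Nat.cast_one,
    Nat.totient_prime hp, Nat.totient_one, Nat.cast_sub hp.one_le, hp.sum_divisors,
    Nat.divisors_one, Finset.sum_singleton, mul_one, Nat.div_one, pow_succ_div,
    pow_succ_mul_div, one_cpow, cpow_neg]
  ring

section Convergence

variable {A : List ℂ} {s : ℂ}

lemma summable_norm_tauSh_prime_pow (hp : p.Prime) (hA : ∀ α ∈ A, 0 < (s + α).re) :
    Summable fun j => ‖tauSh A (p ^ j) * ((p : ℂ) ^ (-s)) ^ j‖ := by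
  induction A with
  | nil =>
    refine summable_of_ne_finset_zero (s := {0}) fun j hj => ?_
    rw [tauSh_nil_prime_pow hp (by simpa using hj), zero_mul, norm_zero]
  | cons a A ih =>
    have geometric : Summable fun j : ℕ => ‖((p : ℂ) ^ (-s - a)) ^ j‖ :=
      summable_norm_geometric_of_norm_lt_one
        (norm_natCast_cpow_neg_sub_lt_one hp.one_lt (hA a List.mem_cons_self))
    have cauchyProduct := summable_norm_sum_mul_antidiagonal_of_summable_norm geometric
      (ih (List.forall_mem_of_forall_mem_cons hA))
    simpa only [tauSh_cons_prime_pow_mul_pow hp] using cauchyProduct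

lemma invEulerFactor_mul_tsum_tauSh (hp : p.Prime) (hA : ∀ α ∈ A, 0 < (s + α).re) :
    invEulerFactor A p s * ∑' j, tauSh A (p ^ j) * ((p : ℂ) ^ (-s)) ^ j = 1 := by
  induction A with
  | nil =>
    rw [tsum_eq_single 0 fun j hj => by rw [tauSh_nil_prime_pow hp hj, zero_mul]]
    simp [invEulerFactor, tauSh_one]
  | cons a A ih =>
    have hA' : ∀ α ∈ A, 0 < (s + α).re := List.forall_mem_of_forall_mem_cons hA
    have ha : ‖(p : ℂ) ^ (-s - a)‖ < 1 :=
      norm_natCast_cpow_neg_sub_lt_one hp.one_lt (hA a List.mem_cons_self)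
    have ha' : 1 - (p : ℂ) ^ (-s - a) ≠ 0 := sub_ne_zero.mpr fun h => by simp [← h] at ha
    simp only [tauSh_cons_prime_pow_mul_pow hp]
    rw [← tsum_mul_tsum_eq_tsum_sum_antidiagonal_of_summable_norm
        (summable_norm_geometric_of_norm_lt_one ha) (summable_norm_tauSh_prime_pow hp hA'),
      tsum_geometric_of_norm_lt_one ha, invEulerFactor_cons, mul_mul_mul_comm,
      mul_inv_cancel₀ ha', one_mul, ih hA']

lemma gSh_prime_pow (hp : p.Prime) (hA : ∀ α ∈ A, 0 < (s + α).re) (n : ℕ) :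
    gSh A s (p ^ n) =
      invEulerFactor A p s * ∑' j, tauSh A (p ^ (j + n)) * ((p : ℂ) ^ (-s)) ^ j := by
  rcases eq_or_ne n 0 with rfl | hn
  · simp only [pow_zero, gSh_one, add_zero, invEulerFactor_mul_tsum_tauSh hp hA]
  · simp only [gSh, Nat.primeFactors_prime_pow hn hp, Finset.prod_singleton, invEulerFactor,
      hp.factorization_pow, Finsupp.single_eq_same, neg_mul_comm, cpow_nat_mul]

lemma summable_tauSh_prime_pow_add (hp : p.Prime) (hA : ∀ α ∈ A, 0 < (s + α).re) (n : ℕ) :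
    Summable fun j => tauSh A (p ^ (j + n)) * ((p : ℂ) ^ (-s)) ^ j := by
  have hx : (p : ℂ) ^ (-s) ≠ 0 := by simp [cpow_eq_zero_iff, hp.ne_zero]
  have shifted := (summable_nat_add_iff n).mpr (summable_norm_tauSh_prime_pow hp hA).of_norm
  refine (summable_mul_right_iff (pow_ne_zero n hx)).mp (shifted.congr fun j => ?_)
  rw [pow_add ((p : ℂ) ^ (-s)), mul_assoc]

lemma gSh_prime_pow_sub (hp : p.Prime) (hA : ∀ α ∈ A, 0 < (s + α).re) (n : ℕ) :
    gSh A s (p ^ n) - (p : ℂ) ^ (-s) * gSh A s (p ^ (n + 1)) =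
      invEulerFactor A p s * tauSh A (p ^ n) := by
  have tail : ∑' j, tauSh A (p ^ (j + 1 + n)) * ((p : ℂ) ^ (-s)) ^ (j + 1) =
      (p : ℂ) ^ (-s) * ∑' j, tauSh A (p ^ (j + (n + 1))) * ((p : ℂ) ^ (-s)) ^ j := by
    rw [← tsum_mul_left]
    refine tsum_congr fun j => ?_
    rw [add_right_comm j 1 n, ← add_assoc j n 1]
    ring
  rw [gSh_prime_pow hp hA, gSh_prime_pow hp hA,
    (summable_tauSh_prime_pow_add hp hA n).tsum_eq_zero_add, tail, zero_add, pow_zero]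
  ring

end Convergence

section DistinguishedEntry

variable {a : ℂ} {A : List ℂ}

lemma GSh_cons_prime_pow_eq_gSh_sub (hp : p.Prime) (hA : ∀ α ∈ a :: A, 0 < (1 - a + α).re) (n : ℕ) :
    GSh (a :: A) (1 - a) (p ^ n) = gSh (a :: A) (1 - a) (p ^ n) -
      invEulerFactor A p (1 - a) * (tauSh (a :: A) (p ^ n) - tauSh A (p ^ n)) := by
  cases n with
  | zero => simp only [pow_zero, GSh_one, gSh_one, tauSh_one, sub_self, mul_zero, sub_zero]
  | succ n =>
    have hp0 : (p : ℂ) ≠ 0 := Nat.cast_ne_zero.mpr hp.ne_zero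
    have hp1 : (p : ℂ) - 1 ≠ 0 := sub_ne_zero.mpr (Nat.cast_ne_one.mpr hp.ne_one)
    have hpa : (p : ℂ) ^ (1 - a) = p * (p : ℂ) ^ (-a) := by
      rw [sub_eq_add_neg, cpow_add _ _ hp0, cpow_one]
    rw [GSh_prime_pow_succ hp, gSh_prime_pow_sub hp hA, tauSh_cons_prime_pow_succ hp,
      invEulerFactor_cons_one_sub, hpa]
    field_simp
    ring

theorem GSh_cons_prime_pow_sub (hp : p.Prime) (hA : ∀ α ∈ a :: A, 0 < (1 - a + α).re) (n : ℕ) :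
    GSh (a :: A) (1 - a) (p ^ n) - (p : ℂ) ^ (-(1 - a)) * GSh (a :: A) (1 - a) (p ^ (n + 1)) =
      invEulerFactor A p (1 - a) * tauSh A (p ^ n) := by
  have hp0 : (p : ℂ) ≠ 0 := Nat.cast_ne_zero.mpr hp.ne_zero
  have hx : (p : ℂ) ^ (-(1 - a)) * (p : ℂ) ^ (-a) = (p : ℂ)⁻¹ := by
    rw [← cpow_add _ _ hp0, show -(1 - a) + -a = -1 by ring, cpow_neg_one]
  have hg := gSh_prime_pow_sub hp hA n
  rw [invEulerFactor_cons_one_sub] at hg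
  rw [GSh_cons_prime_pow_eq_gSh_sub hp hA, GSh_cons_prime_pow_eq_gSh_sub hp hA,
    tauSh_cons_prime_pow_succ hp]
  linear_combination hg + invEulerFactor A p (1 - a) * tauSh (a :: A) (p ^ n) * hx

end DistinguishedEntry

end PrimePowers

/-- Let A have distinguished entry α̂ with ℜ(α̂ − α) < 1 for every entry
α of A, and A′ = A minus α̂. Then for every prime p and d ≥ 0,
G_A(1−α̂, p^d) − p^{−1+α̂} G_A(1−α̂, p^{d+1}) = ∏_{α∈A′}(1 − p^{−1+α̂−α}) τ_{A′}(p^d). -/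
theorem stmt10 (L₁ L₂ : List ℂ) (αh : ℂ)
    (h : ∀ α ∈ L₁ ++ αh :: L₂, (αh - α).re < 1)
    (p : ℕ) (hp : p.Prime) (d : ℕ) :
    GSh (L₁ ++ αh :: L₂) (1 - αh) (p ^ d)
        - (p : ℂ) ^ (-1 + αh) * GSh (L₁ ++ αh :: L₂) (1 - αh) (p ^ (d + 1))
      = ((L₁ ++ L₂).map (fun α => 1 - (p : ℂ) ^ (-1 + αh - α))).prod
          * tauSh (L₁ ++ L₂) (p ^ d) := by
  have hA : ∀ α ∈ αh :: (L₁ ++ L₂), 0 < (1 - αh + α).re := fun α hα => by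
    have := h α (List.perm_middle.mem_iff.mpr hα)
    simp only [add_re, sub_re, one_re] at this ⊢
    linarith
  have hs : -1 + αh = -(1 - αh) := by ring
  rw [GSh_eq_of_perm List.perm_middle, GSh_eq_of_perm List.perm_middle, hs]
  exact GSh_cons_prime_pow_sub hp hA d
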